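/- arXiv:2501.10102 — 2 statements merged into one kernel-verified Lean document; each statement's English description precedes it below -/
import Mathlib

section
/- For every n ≥ 2, the last arrangement of the list Gen(n) is: the arrangement (1,0,2,3,…,n−1) (identity with the first two entries exchanged) if n is odd or n = 2; the arrangement (1,2,3,0) if n = 4; and the arrangement a with a(0) = 1, a(1) = 4, a(2) = 3, a(j) = j+2 for 3 ≤ j ≤ n−3, a(n−2) = 2, a(n−1) = 0 (i.e., (1,4,3,5,6,…,n−1,2,0)) if n is even and n ≥ 6. -/
/-- `cyc i j` is the permutation of positions with `i ↦ j`, `p ↦ p - 1` for `i < p ≤ j`,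
and every other position fixed (the cycle `(j, j-1, …, i)`); it describes extracting
the entry at position `j` and inserting it at position `i`. -/
def cyc {n : ℕ} (i j : Fin n) : Equiv.Perm (Fin n) :=
  (((List.finRange n).filter (fun p => decide (i ≤ p ∧ p ≤ j))).reverse).formPerm

/-- `left_i`: exchange the entries at positions `i` and `i+1`. -/
def leftMove (n i : ℕ) (a : Equiv.Perm (Fin n)) : Equiv.Perm (Fin n) :=
  if h : i + 1 < n then (Equiv.swap ⟨i, by omega⟩ ⟨i + 1, h⟩).trans a else a

/-- `right_i`: move the entry at position `n-1` to position `i`, shifting the entries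
at positions `i, …, n-2` one position to the right. -/
def rightMove (n i : ℕ) (a : Equiv.Perm (Fin n)) : Equiv.Perm (Fin n) :=
  if h : i + 1 < n then (cyc (⟨i, by omega⟩ : Fin n) ⟨n - 1, by omega⟩).trans a else a

/-- The pattern of moves performed between the recursive calls on a sublist of `m = n - i`
elements: one `left`, then `m - 3` times `right` (if `m` is even) or `left` (if `m` is odd),
and finally (when `m > 2`) one more `left`.  `true` codes `left`, `false` codes `right`. -/
def movesList (m : ℕ) : List Bool :=
  true :: (List.replicate (m - 3) (if Even m then false else true) ++
    if 2 < m then [true] else [])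

/-- The recursive generation procedure `gen(a, i)` (with an extra fuel argument making the
recursion structural; `fuel = n - i` always suffices, and `Gen` below uses fuel `n`).
If `i ≥ n - 1` it emits `[a]`; otherwise it first emits `gen(a, i+1)` (the "no-op" call)
and then, for each move prescribed by `movesList (n - i)`, applies that move at position `i`
to the last arrangement emitted so far and emits the generated list of the result. -/
def gen (n : ℕ) : ℕ → Equiv.Perm (Fin n) → ℕ → List (Equiv.Perm (Fin n))
  | 0, a, _ => [a]
  | fuel + 1, a, i =>
      if i + 1 < n then
        (movesList (n - i)).foldl
          (fun acc b =>
            acc ++ gen n fuel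
              ((if b then leftMove n i else rightMove n i) (acc.getLastD 1)) (i + 1))
          (gen n fuel a (i + 1))
      else [a]

/-- `Gen n = gen(id, 0)`: the full list of arrangements produced by the algorithm. -/
def Gen (n : ℕ) : List (Equiv.Perm (Fin n)) := gen n n 1 0


def Fv (n i p : ℕ) : ℕ :=
  if n - i = 1 then p
  else if (n - i) % 2 = 1 ∨ n - i = 2 then
    (if p = i then i + 1 else if p = i + 1 then i else p)
  else if p < i then p else if p = i then i + 1 else if p = n - 1 then i
  else if n - i = 4 then p + 1 else if p = n - 2 then i + 2
  else if p = i + 1 then i + 4 else if p = i + 2 then i + 3 else p + 2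

lemma swap_val {n : ℕ} (i : ℕ) (h0 : i < n) (h : i + 1 < n) (p : Fin n) :
    ((Equiv.swap (⟨i, h0⟩ : Fin n) ⟨i + 1, h⟩ p : Fin n) : ℕ) =
      if (p : ℕ) = i then i + 1 else if (p : ℕ) = i + 1 then i else p := by
  rw [Equiv.swap_apply_def]
  simp only [Fin.ext_iff]
  split_ifs <;> rfl

lemma cyc_filter {n : ℕ} (i : ℕ) (h : i < n) :
    (List.finRange n).filter
      (fun p => decide ((⟨i, h⟩ : Fin n) ≤ p ∧ p ≤ ⟨n - 1, by omega⟩)) =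
      (List.finRange n).drop i := by
  conv_lhs => rw [← List.take_append_drop i (List.finRange n)]
  rw [List.filter_append, List.filter_eq_nil_iff.2, List.filter_eq_self.2, List.nil_append]
  · intro a ha
    obtain ⟨k, hk, rfl⟩ := List.mem_iff_getElem.1 ha
    simp [Fin.le_def] at hk ⊢
    omega
  · intro a ha
    obtain ⟨k, hk, rfl⟩ := List.mem_iff_getElem.1 ha
    simp [Fin.le_def] at hk ⊢
    omega

lemma cyc_val {n : ℕ} (i : ℕ) (h : i < n) (p : Fin n) :
    ((cyc (⟨i, h⟩ : Fin n) ⟨n - 1, by omega⟩ p : Fin n) : ℕ) =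
      if (p : ℕ) < i then (p : ℕ) else if (p : ℕ) = i then n - 1 else (p : ℕ) - 1 := by
  unfold cyc
  rw [cyc_filter]
  have hp := p.2
  set l := ((List.finRange n).drop i).reverse with hl
  have hlen : l.length = n - i := by simp [hl]
  have hnd : l.Nodup := by
    rw [hl, List.nodup_reverse]
    exact (List.nodup_finRange n).sublist (List.drop_sublist _ _)
  have hget : ∀ (k : ℕ) (hk : k < l.length), (l[k] : Fin n).val = n - 1 - k := by
    intro k hk
    simp [hl, List.getElem_reverse]
    omega
  split_ifs with h1 h2
  · rw [List.formPerm_apply_of_notMem]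
    intro hm
    obtain ⟨k, hk, rfl⟩ := List.mem_iff_getElem.1 hm
    rw [hget] at h1
    omega
  · have hk : n - 1 - p < l.length := by omega
    have e : p = l[n - 1 - p] := by
      apply Fin.ext; rw [hget]; omega
    conv_lhs => rw [e]
    rw [List.formPerm_apply_getElem _ hnd, hget]
    have : n - 1 - (p : ℕ) + 1 = l.length := by omega
    rw [this, Nat.mod_self]; omega
  · have hk : n - 1 - p < l.length := by omega
    have e : p = l[n - 1 - p] := by
      apply Fin.ext; rw [hget]; omega
    conv_lhs => rw [e]
    rw [List.formPerm_apply_getElem _ hnd, hget, Nat.mod_eq_of_lt (by omega)]; omega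

lemma cycle_pow {n : ℕ} (m : ℕ) (c : Equiv.Perm (Fin n)) (S : Fin n → Prop) (g : ℕ → ℕ)
    (h1 : ∀ p, ¬ S p → c p = p)
    (h2 : ∀ p, S p → S (c p))
    (h3 : ∀ p : Fin n, S p → g (c p) = g p + 1 ∨ (g p + 1 = m ∧ g (c p) = 0))
    (h4 : ∀ p : Fin n, S p → g p < m)
    (h5 : ∀ p q : Fin n, S p → S q → g p = g q → p = q) : c ^ m = 1 := by
  ext1 p
  by_cases hp : S p
  · have key : ∀ k, S ((c ^ k) p) ∧ g ((c ^ k) p : Fin n) ≡ g p + k [MOD m] := by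
      intro k
      induction k with
      | zero => exact ⟨hp, Nat.ModEq.refl _⟩
      | succ k ih =>
        rw [pow_succ', Equiv.Perm.mul_apply]
        refine ⟨h2 _ ih.1, ?_⟩
        have h := ih.2.add_right 1
        rcases h3 _ ih.1 with e | ⟨e, e'⟩
        · rw [e]; exact h
        · rw [e']
          rw [e] at h
          have : (0 : ℕ) ≡ m [MOD m] := by simp [Nat.ModEq]
          exact this.trans h
    obtain ⟨a, b⟩ := key m
    apply h5 _ _ a hp
    have b' : g ((c ^ m) p : Fin n) ≡ g p [MOD m] := by
      refine b.trans ?_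
      simp [Nat.ModEq]
    exact Nat.ModEq.eq_of_lt_of_lt b' (h4 _ a) (h4 _ hp)
  · have : ∀ k, (c ^ k) p = p := by
      intro k
      induction k with
      | zero => rfl
      | succ k ih => rw [pow_succ', Equiv.Perm.mul_apply, ih, h1 p hp]
    exact this m

lemma foldl_last {n : ℕ} (i : ℕ) (f : Equiv.Perm (Fin n) → List (Equiv.Perm (Fin n)))
    (σ s r : Equiv.Perm (Fin n)) (hf : ∀ a d, (f a).getLastD d = a * σ)
    (hs : ∀ a, leftMove n i a = a * s) (hr : ∀ a, rightMove n i a = a * r)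
    (bs : List Bool) : ∀ (acc : List (Equiv.Perm (Fin n))) (x : Equiv.Perm (Fin n)),
    (∀ d, acc.getLastD d = x) → ∀ d,
    (bs.foldl (fun acc b => acc ++ f ((if b then leftMove n i else rightMove n i)
      (acc.getLastD 1))) acc).getLastD d
      = x * (bs.map (fun b => (if b then s else r) * σ)).prod := by
  induction bs with
  | nil => intro acc x h d; simpa using h d
  | cons b bs ih =>
    intro acc x h d
    rw [List.foldl_cons, List.map_cons, List.prod_cons, ← mul_assoc]
    apply ih
    intro d
    have : ∀ (l1 l2 : List (Equiv.Perm (Fin n))), (l1 ++ l2).getLastD d = l2.getLastD (l1.getLastD d) := by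
      intro l1 l2
      simp [List.getLastD_eq_getLast?, List.getLast?_append]
    rw [this, hf, h]
    cases b <;> simp [hs, hr, mul_assoc]

def gv (n i p : ℕ) : ℕ :=
  if p = i + 1 then 0 else if p = i then n - i - 1 else if p = i + 2 then 1
  else if p = i + 3 then (n - i - 1) / 2
  else if (p - i) % 2 = 1 then (p - i - 1) / 2 else (n - i - 3 + (p - i)) / 2

set_option maxHeartbeats 4000000 in
lemma odd_pow {n i : ℕ} (h : i + 1 < n) (ho : (n - i) % 2 = 1) (σ s : Equiv.Perm (Fin n))
    (hσ : ∀ p, (σ p : ℕ) = Fv n (i + 1) p)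
    (hs : ∀ p, (s p : ℕ) = if (p : ℕ) = i then i + 1 else if (p : ℕ) = i + 1 then i else p) :
    (s * σ) ^ (n - i) = 1 := by
  have hc : ∀ p : Fin n, ((s * σ) p : ℕ) =
      if (p : ℕ) < i then (p : ℕ) else if (p : ℕ) = i then i + 1
      else if (p : ℕ) = n - 1 then i
      else if n - i = 3 ∨ n - i = 5 then p + 1
      else if (p : ℕ) = n - 2 then i + 3
      else if (p : ℕ) = i + 1 then i + 2 else if (p : ℕ) = i + 1 + 1 then i + 5
      else if (p : ℕ) = i + 3 then i + 4 else p + 2 := by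
    intro p
    have hp := p.2
    rw [Equiv.Perm.mul_apply, hs]
    have e := hσ p
    generalize (σ p : ℕ) = v at *
    unfold Fv at e
    split_ifs at e <;> (try omega) <;> split_ifs <;> omega
  apply cycle_pow (n - i) _ (fun p => i ≤ (p : ℕ)) (gv n i)
  · intro p hp
    apply Fin.ext
    rw [hc, if_pos (by omega)]
  · intro p hp
    have hp2 := p.2
    show i ≤ _
    rw [hc]
    split_ifs <;> omega
  · intro p hp
    have hp2 := p.2
    have e := hc p
    generalize ((s * σ) p : ℕ) = v at *
    simp only [gv]
    split_ifs at e <;> (try omega) <;> subst e <;> split_ifs <;> omega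
  · intro p hp
    have hp2 := p.2
    simp only [gv]
    split_ifs <;> omega
  · intro p q hp hq e
    have hp2 := p.2
    have hq2 := q.2
    apply Fin.ext
    simp only [gv] at e
    split_ifs at e <;> omega

lemma even_arith {n i p v1 v2 v3 v4 v5 v6 : ℕ} (h : i + 3 < n) (he : (n - i) % 2 = 0) (hp : p < n)
    (e1 : v1 = if p = i + 1 then i + 2 else if p = i + 2 then i + 1 else p)
    (e2 : v2 = if v1 = i then i + 1 else if v1 = i + 1 then i else v1)
    (e3 : v3 = if v2 < i then v2 else if v2 = i then i + 3
      else if v2 = i + 1 then i + 1 else if v2 = n - 2 then i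
      else if v2 = n - 1 then i + 2 else v2 + 2)
    (e4 : v4 = if v3 = i + 1 then i + 2 else if v3 = i + 2 then i + 1 else v3)
    (e5 : v5 = if v4 = i then i + 1 else if v4 = i + 1 then i else v4)
    (e6 : v6 = if v5 = i + 1 then i + 2 else if v5 = i + 2 then i + 1 else v5) :
    v6 = Fv n i p := by
  have a2 : v2 = if p = i then i + 1 else if p = i + 1 then i + 2 else if p = i + 2 then i else p := by
    clear e3 e4 e5 e6
    split_ifs at e1 <;> split_ifs at e2 <;> split_ifs <;> omega
  have a6 : v6 = if v3 = i then i + 2 else if v3 = i + 2 then i else v3 := by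
    clear e1 e2 e3 a2
    split_ifs at e4 <;> split_ifs at e5 <;> split_ifs at e6 <;> split_ifs <;> omega
  clear e1 e2 e4 e5 e6
  obtain ⟨w, hw⟩ : ∃ w, w = Fv n i p := ⟨_, rfl⟩
  rw [← hw]
  rw [Fv, if_neg (show ¬ n - i = 1 by omega), if_neg (show ¬ ((n - i) % 2 = 1 ∨ n - i = 2) by omega)] at hw
  by_cases h4 : n - i = 4
  · rw [if_pos h4] at hw
    split_ifs at a2 <;> split_ifs at hw <;> (try omega) <;> split_ifs at e3 <;> (try omega) <;>
      split_ifs at a6 <;> omega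
  · rw [if_neg h4] at hw
    split_ifs at a2 <;> split_ifs at hw <;> (try omega) <;> split_ifs at e3 <;> (try omega) <;>
      split_ifs at a6 <;> omega

set_option maxHeartbeats 4000000 in
lemma even_val {n i : ℕ} (h : i + 3 < n) (he : (n - i) % 2 = 0) (σ s r : Equiv.Perm (Fin n))
    (hσ : ∀ p, (σ p : ℕ) = Fv n (i + 1) p)
    (hs : ∀ p, (s p : ℕ) = if (p : ℕ) = i then i + 1 else if (p : ℕ) = i + 1 then i else p)
    (hr : ∀ p, (r p : ℕ) = if (p : ℕ) < i then (p : ℕ) else if (p : ℕ) = i then n - 1 else (p : ℕ) - 1)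
    (p : Fin n) :
    ((σ * ((s * σ) * ((r * σ) ^ (n - i - 3) * (s * σ))) : Equiv.Perm (Fin n)) p : ℕ) = Fv n i p := by
  have hσ' : ∀ p, (σ p : ℕ) = if (p : ℕ) = i + 1 then i + 2 else if (p : ℕ) = i + 2 then i + 1 else p := by
    intro p
    rw [hσ, Fv, if_neg (by omega), if_pos (by omega)]
  have hd : ∀ p : Fin n, ((r * σ) p : ℕ) =
      if (p : ℕ) < i then (p : ℕ) else if (p : ℕ) = i then n - 1
      else if (p : ℕ) = i + 1 then i + 1 else if (p : ℕ) = i + 2 then i else (p : ℕ) - 1 := by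
    intro p
    rw [Equiv.Perm.mul_apply, hr, hσ']
    split_ifs <;> omega
  have hpow : (r * σ) ^ (n - i - 1) = 1 := by
    apply cycle_pow (n - i - 1) _ (fun p => i ≤ (p : ℕ) ∧ (p : ℕ) ≠ i + 1)
      (fun p => if p = i then 0 else n - p)
    · intro p hp
      apply Fin.ext
      rw [hd]
      split_ifs <;> omega
    · intro p hp
      have hp2 := p.2
      show i ≤ _ ∧ _ ≠ _
      rw [hd]
      split_ifs <;> omega
    · intro p hp
      have hp2 := p.2
      simp only [hd]
      split_ifs <;> omega
    · intro p hp
      have hp2 := p.2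
      split_ifs <;> omega
    · intro p q hp hq e
      have hp2 := p.2
      have hq2 := q.2
      apply Fin.ext
      split_ifs at e <;> omega
  set d := r * σ with hdd
  have hq : ∀ q : Fin n, ((d ^ (n - i - 3)) q : ℕ) =
      if (q : ℕ) < i then (q : ℕ) else if (q : ℕ) = i then i + 3
      else if (q : ℕ) = i + 1 then i + 1 else if (q : ℕ) = n - 2 then i
      else if (q : ℕ) = n - 1 then i + 2 else q + 2 := by
    intro q
    have hq2 := q.2
    obtain ⟨v, hv⟩ : ∃ v : ℕ, v = if (q : ℕ) < i then (q : ℕ) else if (q : ℕ) = i then i + 3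
      else if (q : ℕ) = i + 1 then i + 1 else if (q : ℕ) = n - 2 then i
      else if (q : ℕ) = n - 1 then i + 2 else q + 2 := ⟨_, rfl⟩
    have hvn : v < n := by split_ifs at hv <;> omega
    obtain ⟨y, hy⟩ : ∃ y : Fin n, (y : ℕ) = if (q : ℕ) < i then (q : ℕ) else if (q : ℕ) = i then i + 3
      else if (q : ℕ) = i + 1 then i + 1 else if (q : ℕ) = n - 2 then i
      else if (q : ℕ) = n - 1 then i + 2 else q + 2 :=
      ⟨⟨v, hvn⟩, hv⟩
    rw [← hy]
    congr 1
    have e : d (d y) = q := by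
      apply Fin.ext
      have h1 := hd y
      have h2 := hd (d y)
      split_ifs at hy <;> split_ifs at h1 <;> (try omega) <;> split_ifs at h2 <;> omega
    rw [← e, ← Equiv.Perm.mul_apply, ← Equiv.Perm.mul_apply, ← pow_succ, ← pow_succ,
      show n - i - 3 + 1 + 1 = n - i - 1 by omega, hpow]
    rfl
  have hp := p.2
  simp only [Equiv.Perm.mul_apply]
  have e1 := hσ' p
  have e2 := hs (σ p)
  have e3 := hq (s (σ p))
  generalize (d ^ (n - i - 3)) (s (σ p)) = y at *
  have e4 := hσ' y
  have e5 := hs (σ y)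
  have e6 := hσ' (s (σ y))
  exact even_arith h he hp e1 e2 e3 e4 e5 e6

lemma gen_last (n : ℕ) : ∀ (fuel i : ℕ), i < n → n - i ≤ fuel →
    ∃ σ : Equiv.Perm (Fin n), (∀ a d, (gen n fuel a i).getLastD d = a * σ) ∧
      ∀ p, (σ p : ℕ) = Fv n i p := by
  intro fuel
  induction fuel with
  | zero => intro i h h'; omega
  | succ fuel ih =>
    intro i h h'
    by_cases hi : i + 1 < n
    · obtain ⟨σ, h1, h2⟩ := ih (i + 1) hi (by omega)
      have hs : ∀ a, leftMove n i a = a * Equiv.swap (⟨i, h⟩ : Fin n) ⟨i + 1, hi⟩ := by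
        intro a; rw [leftMove, dif_pos hi]; rfl
      have hr : ∀ a, rightMove n i a = a * cyc (⟨i, h⟩ : Fin n) ⟨n - 1, by omega⟩ := by
        intro a; rw [rightMove, dif_pos hi]; rfl
      have hsv := swap_val i h hi
      have hrv := cyc_val i h
      generalize Equiv.swap (⟨i, h⟩ : Fin n) ⟨i + 1, hi⟩ = s at *
      generalize cyc (⟨i, h⟩ : Fin n) ⟨n - 1, by omega⟩ = r at *
      have key : ∀ a d, (gen n (fuel + 1) a i).getLastD d = a * σ *
          ((movesList (n - i)).map (fun b => (if b then s else r) * σ)).prod := by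
        intro a d
        rw [gen, if_pos hi]
        exact foldl_last i (fun a => gen n fuel a (i + 1)) σ s r h1 hs hr _ _ _ (fun d => h1 a d) d
      refine ⟨σ * ((movesList (n - i)).map (fun b => (if b then s else r) * σ)).prod, ?_, ?_⟩
      · intro a d; rw [key, mul_assoc]
      · rcases Nat.even_or_odd (n - i) with he | ho
        · have he' := Nat.even_iff.1 he
          by_cases h2' : n - i = 2
          · have e : movesList (n - i) = [true] := by rw [h2']; rfl
            rw [e]
            intro p
            have hp := p.2
            have hσ1 : ∀ p, σ p = p := by
              intro p; apply Fin.ext; rw [h2, Fv, if_pos (by omega)]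
            simp [hσ1, hsv, Fv, h2']
          · have e : movesList (n - i) = true :: (List.replicate (n - i - 3) false ++ [true]) := by
              rw [movesList, if_pos he, if_pos (by omega)]
            intro p
            rw [e, ← even_val (by omega) he' σ s r h2 hsv hrv p]
            simp
        · have ho' := Nat.odd_iff.1 ho
          have e : movesList (n - i) = List.replicate (n - i - 1) true := by
            rw [movesList, if_neg (Nat.not_even_iff_odd.2 ho), if_pos (by omega)]
            rw [← List.replicate_succ', ← List.replicate_succ]
            congr 1; omega
          have hpow := odd_pow hi ho' σ s h2 hsv
          have e2 : σ * (s * σ) ^ (n - i - 1) = s := by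
            have hss : s * s = 1 := by
              ext p
              rw [Equiv.Perm.mul_apply, hsv, hsv, Equiv.Perm.one_apply]
              split_ifs <;> omega
            calc σ * (s * σ) ^ (n - i - 1) = (s * s) * (σ * (s * σ) ^ (n - i - 1)) := by rw [hss, one_mul]
              _ = s * (s * σ) ^ (n - i - 1 + 1) := by rw [pow_succ']; simp only [mul_assoc]
              _ = s := by rw [show n - i - 1 + 1 = n - i by omega, hpow, mul_one]
          intro p
          rw [e, List.map_replicate, List.prod_replicate, if_pos rfl, e2, hsv]
          have hF : Fv n i p = if (p : ℕ) = i then i + 1 else if (p : ℕ) = i + 1 then i else p := by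
            rw [Fv, if_neg (show ¬ n - i = 1 by omega), if_pos (Or.inl ho')]
          rw [hF]
    · refine ⟨1, ?_, ?_⟩
      · intro a d; rw [gen, if_neg hi]; simp
      · intro p; rw [Fv, if_pos (by omega)]; rfl

/-- The last arrangement of `Gen n` (for `n ≥ 2`) is: `(1,0,2,3,…,n-1)` if `n` is odd or
`n = 2`; `(1,2,3,0)` if `n = 4`; and `(1,4,3,5,6,…,n-1,2,0)` if `n` is even with `n ≥ 6`. -/
theorem gen_getLast (n : ℕ) (hn : 2 ≤ n) :
    ((Odd n ∨ n = 2) →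
      ((Gen n).getLastD 1) ⟨0, by omega⟩ = ⟨1, by omega⟩ ∧
      ((Gen n).getLastD 1) ⟨1, by omega⟩ = ⟨0, by omega⟩ ∧
      ∀ p : Fin n, 2 ≤ (p : ℕ) → ((Gen n).getLastD 1) p = p) ∧
    (∀ h4 : n = 4,
      ((Gen n).getLastD 1) ⟨0, by omega⟩ = ⟨1, by omega⟩ ∧
      ((Gen n).getLastD 1) ⟨1, by omega⟩ = ⟨2, by omega⟩ ∧
      ((Gen n).getLastD 1) ⟨2, by omega⟩ = ⟨3, by omega⟩ ∧
      ((Gen n).getLastD 1) ⟨3, by omega⟩ = ⟨0, by omega⟩) ∧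
    (Even n → ∀ h6 : 6 ≤ n,
      ((Gen n).getLastD 1) ⟨0, by omega⟩ = ⟨1, by omega⟩ ∧
      ((Gen n).getLastD 1) ⟨1, by omega⟩ = ⟨4, by omega⟩ ∧
      ((Gen n).getLastD 1) ⟨2, by omega⟩ = ⟨3, by omega⟩ ∧
      (∀ j : ℕ, ∀ _h3 : 3 ≤ j, ∀ _hj : j ≤ n - 3,
        ((Gen n).getLastD 1) ⟨j, by omega⟩ = ⟨j + 2, by omega⟩) ∧
      ((Gen n).getLastD 1) ⟨n - 2, by omega⟩ = ⟨2, by omega⟩ ∧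
      ((Gen n).getLastD 1) ⟨n - 1, by omega⟩ = ⟨0, by omega⟩) := by
  obtain ⟨σ, h1, h2⟩ := gen_last n n 0 (by omega) (by omega)
  have hG : (Gen n).getLastD 1 = σ := by rw [Gen, h1, one_mul]
  rw [hG]
  have h3 : ∀ (p : ℕ) (hp : p < n), ((σ ⟨p, hp⟩ : Fin n) : ℕ) = Fv n 0 p := fun p hp => h2 ⟨p, hp⟩
  refine ⟨?_, ?_, ?_⟩
  · intro h
    have h' : n % 2 = 1 ∨ n = 2 := by
      rcases h with h | h
      · exact Or.inl (Nat.odd_iff.1 h)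
      · exact Or.inr h
    have hv : ∀ p, Fv n 0 p = if p = 0 then 1 else if p = 1 then 0 else p := by
      intro p
      rw [Fv, if_neg (show ¬ n - 0 = 1 by omega),
        if_pos (show (n - 0) % 2 = 1 ∨ n - 0 = 2 by omega)]
    refine ⟨?_, ?_, ?_⟩
    · apply Fin.ext; rw [h3, hv]; rfl
    · apply Fin.ext; rw [h3, hv]; rfl
    · intro p hp; apply Fin.ext; rw [h2, hv, if_neg (by omega), if_neg (by omega)]
  · intro h
    subst h
    refine ⟨?_, ?_, ?_, ?_⟩ <;>
    · apply Fin.ext; rw [h3]; rfl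
  · intro h h6
    have h' := Nat.even_iff.1 h
    have hv : ∀ p, Fv n 0 p = if p = 0 then 1 else if p = n - 1 then 0
        else if p = n - 2 then 2 else if p = 1 then 4 else if p = 2 then 3 else p + 2 := by
      intro p
      rw [Fv, if_neg (show ¬ n - 0 = 1 by omega),
        if_neg (show ¬ ((n - 0) % 2 = 1 ∨ n - 0 = 2) by omega), if_neg (Nat.not_lt_zero p),
        if_neg (show ¬ n - 0 = 4 by omega)]
    refine ⟨?_, ?_, ?_, ?_, ?_, ?_⟩
    · apply Fin.ext; rw [h3, hv, if_pos rfl]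
    · apply Fin.ext; rw [h3, hv, if_neg (by omega), if_neg (by omega), if_neg (by omega), if_pos rfl]
    · apply Fin.ext
      rw [h3, hv, if_neg (by omega), if_neg (by omega), if_neg (by omega), if_neg (by omega),
        if_pos rfl]
    · intro j h3' hj
      apply Fin.ext
      rw [h3, hv, if_neg (by omega), if_neg (by omega), if_neg (by omega), if_neg (by omega),
        if_neg (by omega)]
    · apply Fin.ext; rw [h3, hv, if_neg (by omega), if_neg (by omega), if_pos rfl]
    · apply Fin.ext; rw [h3, hv, if_neg (by omega), if_pos rfl]
end

section
/- Let n ≥ 1 and let σ, τ be two consecutive entries of the list Gen(n). Then there exist positions i ≤ j < n such that τ = σ ∘ c_{i,j}, where c_{i,j} is the permutation of Fin n with c_{i,j}(i) = j, c_{i,j}(p) = p−1 for i < p ≤ j, and c_{i,j}(p) = p otherwise. That is, each permutation in the generated sequence is obtained from the previous one by extracting a single element and inserting it at an earlier position. -/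
def StepRel {n : ℕ} (σ τ : Equiv.Perm (Fin n)) : Prop :=
  ∃ i j : Fin n, i ≤ j ∧ ∃ c : Fin n → Fin n,
      c i = j ∧
      (∀ p : Fin n, i < p → p ≤ j → (c p : ℕ) = (p : ℕ) - 1) ∧
      (∀ p : Fin n, p < i ∨ j < p → c p = p) ∧
      ∀ p : Fin n, τ p = σ (c p)

theorem cyc_list {n i : ℕ} (hi : i + 1 < n) :
    (List.finRange n).filter
      (fun p => decide ((⟨i, by omega⟩ : Fin n) ≤ p ∧ p ≤ ⟨n - 1, by omega⟩)) =
    List.ofFn (fun k : Fin (n - i) => (⟨i + k, by omega⟩ : Fin n)) := by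
  have h1 : ((List.finRange n).filter
      (fun p => decide ((⟨i, by omega⟩ : Fin n) ≤ p ∧ p ≤ ⟨n - 1, by omega⟩))).Pairwise (· < ·) :=
    (List.pairwise_lt_finRange n).filter _
  have h2 : (List.ofFn (fun k : Fin (n - i) => (⟨i + k, by omega⟩ : Fin n))).Pairwise (· < ·) := by
    rw [List.pairwise_ofFn]
    intro a b hab
    simp only [Fin.lt_def] at hab ⊢
    omega
  refine List.Perm.eq_of_pairwise (le := (· < ·)) (fun a b _ _ hab hba => absurd hab (lt_asymm hba)) h1 h2 ?_
  rw [List.perm_ext_iff_of_nodup (h1.imp (fun h => ne_of_lt h)) (h2.imp (fun h => ne_of_lt h))]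
  intro a
  simp only [List.mem_filter, List.mem_finRange, true_and, decide_eq_true_eq, List.mem_ofFn,
    Fin.le_def]
  constructor
  · rintro ⟨h, -⟩
    exact ⟨⟨a - i, by omega⟩, by ext; simp; omega⟩
  · rintro ⟨k, rfl⟩
    simp only
    omega

theorem step_right {n i : ℕ} (hi : i + 1 < n) (a : Equiv.Perm (Fin n)) :
    StepRel a (rightMove n i a) := by
  have hnd : (List.ofFn (fun k : Fin (n - i) => (⟨i + k, by omega⟩ : Fin n))).Nodup := by
    rw [← cyc_list hi]
    exact (List.nodup_finRange n).filter _
  have key : ∀ k (hk : k < n - i),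
      (List.ofFn (fun k : Fin (n - i) => (⟨i + k, by omega⟩ : Fin n))).formPerm ⟨i + k, by omega⟩
        = ⟨i + (k + 1) % (n - i), by
            have := Nat.mod_lt (k + 1) (show 0 < n - i by omega); omega⟩ := by
    intro k hk
    have := List.formPerm_apply_getElem _ hnd k (by simpa using hk)
    simpa using this
  have hc : cyc (⟨i, by omega⟩ : Fin n) ⟨n - 1, by omega⟩ =
      (List.ofFn (fun k : Fin (n - i) => (⟨i + k, by omega⟩ : Fin n))).formPerm⁻¹ := by
    unfold cyc
    rw [List.formPerm_reverse, cyc_list hi]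
  refine ⟨⟨i, by omega⟩, ⟨n - 1, by omega⟩, by simp only [Fin.le_def]; omega,
    cyc (⟨i, by omega⟩ : Fin n) ⟨n - 1, by omega⟩, ?_, ?_, ?_, ?_⟩
  · rw [hc, Equiv.Perm.inv_eq_iff_eq]
    have := key (n - 1 - i) (by omega)
    have e : n - 1 - i + 1 = n - i := by omega
    have e2 : i + (n - 1 - i) = n - 1 := by omega
    simp only [e, e2, Nat.mod_self, Nat.add_zero] at this
    exact this.symm
  · intro p h1 h2
    have h1' : i < (p : ℕ) := h1
    have : cyc (⟨i, by omega⟩ : Fin n) ⟨n - 1, by omega⟩ p = ⟨p - 1, by omega⟩ := by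
      rw [hc, Equiv.Perm.inv_eq_iff_eq]
      have := key (p - 1 - i) (by omega)
      have e : (p : ℕ) - 1 - i + 1 = p - i := by omega
      have e2 : i + ((p : ℕ) - 1 - i) = p - 1 := by omega
      have e3 : i + ((p : ℕ) - i) = p := by omega
      have e4 : ((p : ℕ) - i) % (n - i) = p - i := Nat.mod_eq_of_lt (by omega)
      simp only [e, e2, e4, e3] at this
      exact this.symm
    rw [this]
  · intro p hp
    have hp' : (p : ℕ) < i := by
      simp only [Fin.lt_def] at hp
      omega
    rw [hc, Equiv.Perm.inv_eq_iff_eq]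
    symm
    apply List.formPerm_apply_of_notMem
    simp only [List.mem_ofFn, not_exists]
    rintro k rfl
    simp at hp'
  · intro p
    simp [rightMove, hi]

theorem step_left {n i : ℕ} (hi : i + 1 < n) (a : Equiv.Perm (Fin n)) :
    StepRel a (leftMove n i a) := by
  refine ⟨⟨i, by omega⟩, ⟨i + 1, hi⟩, by simp [Fin.le_def],
    Equiv.swap ⟨i, by omega⟩ ⟨i + 1, hi⟩, by simp, ?_, ?_, ?_⟩
  · intro p h1 h2
    have : p = ⟨i + 1, hi⟩ := by
      simp only [Fin.lt_def, Fin.le_def] at h1 h2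
      ext
      simp only
      omega
    subst this
    simp
  · intro p hp
    simp only [Fin.lt_def] at hp
    apply Equiv.swap_apply_of_ne_of_ne
    · rintro rfl; simp at hp
    · rintro rfl; simp at hp
  · intro p
    simp [leftMove, hi]

theorem gen_chain (n fuel : ℕ) : ∀ (a : Equiv.Perm (Fin n)) (i : ℕ),
    (gen n fuel a i).IsChain StepRel ∧ (gen n fuel a i).head? = some a := by
  induction fuel with
  | zero => intro a i; simp [gen]
  | succ fuel ih =>
    intro a i
    unfold gen
    split_ifs with hi
    · have main : ∀ (L : List Bool) (acc : List (Equiv.Perm (Fin n))),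
          acc.IsChain StepRel ∧ acc.head? = some a →
          (L.foldl (fun acc b =>
            acc ++ gen n fuel
              ((if b then leftMove n i else rightMove n i) (acc.getLastD 1)) (i + 1)) acc).IsChain
              StepRel ∧
          (L.foldl (fun acc b =>
            acc ++ gen n fuel
              ((if b then leftMove n i else rightMove n i) (acc.getLastD 1)) (i + 1)) acc).head?
              = some a := by
        intro L
        induction L with
        | nil => intro acc h; exact h
        | cons b L ihL =>
          intro acc h
          rw [List.foldl_cons]
          apply ihL
          refine ⟨?_, by simp [List.head?_append, h.2]⟩
          rw [List.isChain_append]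
          refine ⟨h.1, (ih _ _).1, ?_⟩
          intro x hx y hy
          rw [(ih _ _).2] at hy
          have hx' : acc.getLastD 1 = x := by
            rw [List.getLastD_eq_getLast?]
            rw [Option.mem_def] at hx
            rw [hx]; rfl
          rw [hx'] at hy
          simp only [Option.mem_def, Option.some.injEq] at hy
          subst hy
          cases b
          · exact step_right hi x
          · exact step_left hi x
      exact main _ _ (ih _ _)
    · simp

/-- Any two consecutive entries `σ, τ` of `Gen n` satisfy `τ = σ ∘ c` for the
permutation `c = c_{i,j}` of `Fin n` (for some positions `i ≤ j`) with `c i = j`,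
`c p = p - 1` for `i < p ≤ j`, and `c p = p` otherwise: each permutation is obtained
from the previous one by extracting the entry at position `j` and inserting it at the
earlier position `i`. -/
theorem gen_consecutive (n : ℕ) (hn : 1 ≤ n) (m : ℕ) (hm : m + 1 < (Gen n).length) :
    ∃ i j : Fin n, i ≤ j ∧ ∃ c : Fin n → Fin n,
      c i = j ∧
      (∀ p : Fin n, i < p → p ≤ j → (c p : ℕ) = (p : ℕ) - 1) ∧
      (∀ p : Fin n, p < i ∨ j < p → c p = p) ∧
      ∀ p : Fin n,
        ((Gen n).get ⟨m + 1, hm⟩) p = ((Gen n).get ⟨m, by omega⟩) (c p) := by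
  have h := (gen_chain n n 1 0).1
  rw [List.isChain_iff_getElem] at h
  exact h m hm
end
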